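/- Let r, m ∈ ℕ, let ℕ = E_1 ∪ … ∪ E_r, and for each i ∈ {1,…,m} let A_i be a u_i×v_i image partition regular matrix over (ℕ,+) with u_i, v_i ∈ ℕ. Then there exist k ∈ {1,…,r}, vectors x^(i), y^(i) ∈ ℕ^{v_i} for i ∈ {1,…,m}, and a sequence {z_t}_{t=1}^∞ in ℕ such that: all entries of A_i x^(i) lie in E_k for each i ∈ {1,…,m}; P(A_1y^(1), A_2y^(2), …, A_my^(m)) ⊆ E_k; and PS_m({z_t}_{t=1}^∞) ⊆ E_k. -/

import Mathlib

/- `ℕ+` plays the role of the paper's `ℕ = {1,2,3,…}`.  `Ultrafilter ℕ+` is `βℕ`. -/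

/-- Product of ultrafilters: `U ∈ umul p q ↔ {x | {y | x*y ∈ U} ∈ q} ∈ p`. -/
def umul (p q : Ultrafilter ℕ+) : Ultrafilter ℕ+ :=
  p.bind fun x => q.map fun y => x * y

/-- Sum of ultrafilters: `U ∈ uadd p q ↔ {x | {y | x+y ∈ U} ∈ q} ∈ p`. -/
def uadd (p q : Ultrafilter ℕ+) : Ultrafilter ℕ+ :=
  p.bind fun x => q.map fun y => x + y

/-- The matrix-vector product `Ax` (computed in `ℚ`) of a row-finite matrix `A`
with a vector `x` of positive integers. -/
noncomputable def mulVecQ {ι κ : Type} (A : ι → κ → ℚ) (x : κ → ℕ+) : ι → ℚ :=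
  fun i => ∑ᶠ j, A i j * ((x j : ℕ) : ℚ)

/-- All entries of the vector `y` are (positive) natural numbers lying in `P`. -/
def entriesIn {ι : Type} (y : ι → ℚ) (P : Set ℕ+) : Prop :=
  ∀ i, ∃ n ∈ P, y i = ((n : ℕ) : ℚ)

/-- `A` is image partition regular: for every finite coloring of `ℕ` there is
a vector `x` over `ℕ` all entries of whose image `Ax` are monochromatic. -/
def IPR {ι κ : Type} (A : ι → κ → ℚ) : Prop :=
  ∀ (r : ℕ) (c : ℕ+ → Fin r), ∃ (k : Fin r) (x : κ → ℕ+),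
    entriesIn (mulVecQ A x) {n | c n = k}

/-- `I(A) = {p ∈ βℕ : for every P ∈ p there is x over ℕ with all entries of Ax in P}`. -/
def ISet {ι κ : Type} (A : ι → κ → ℚ) : Set (Ultrafilter ℕ+) :=
  {p | ∀ P ∈ p, ∃ x : κ → ℕ+, entriesIn (mulVecQ A x) P}

/-- `PSm m x` is `PS_m({x_t})`: all products `∏_{i=1}^m ∑_{t ∈ F_i} x_t` where
`F_1, …, F_m` are finite nonempty subsets of the index set with
`max F_i < min F_{i+1}`. -/
def PSm (m : ℕ) (x : ℕ → ℕ+) : Set ℕ+ :=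
  {z | ∃ F : Fin m → Finset ℕ,
    (∀ i, (F i).Nonempty) ∧
    (∀ i j : Fin m, i < j → ∀ a ∈ F i, ∀ b ∈ F j, a < b) ∧
    (z : ℕ) = ∏ i, ∑ t ∈ F i, (x t : ℕ)}

/-!
The sets `I(A i) = ISet (A i)` are nonempty closed two-sided ideals of `(βℕ, ·)`, so they have a
common point (a product of one point from each); they are also subsemigroups of `(βℕ, +)`, so their
intersection contains an additive idempotent `q`. Any class `P ∈ q ^ m` works: `q ^ m` still lies
in each `I(A i)`; reading `P ∈ q * ⋯ * q` one factor at a time and using `q ∈ I(A i)` at the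
`i`-th factor gives the vectors `y i`. For the sequence, `P ∈ c * q ^ (j + 1)` says that
`P ∈ c * x * q ^ j` for `q`-many `x`, and since `q` is idempotent the terms can be chosen as in the
Galvin–Glazer proof of Hindman's theorem so that every finite sum of late terms is such an `x`, for
all of the finitely many `c` that can arise from earlier terms.
-/

open Filter Hindman

section Monoid

variable {M : Type*} [Monoid M]

/-- The Stone–Čech compactification `βM` of a discrete monoid `M` as a monoid: Mathlib's semigroup
structure on ultrafilters, with the principal ultrafilter at `1` as identity. It gives meaning to
the powers `q ^ m` and to products of lists of ultrafilters. -/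
abbrev ultrafilterMonoid : Monoid (Ultrafilter M) where
  __ := Ultrafilter.semigroup
  one := pure 1
  one_mul q := Ultrafilter.coe_injective <| Filter.ext' fun P => by
    change (∀ᶠ y in q, P (1 * y)) ↔ _
    simp only [one_mul]
  mul_one q := Ultrafilter.coe_injective <| Filter.ext' fun P => by
    change (∀ᶠ x in q, P (x * 1)) ↔ _
    simp only [mul_one]

attribute [local instance] ultrafilterMonoid

theorem eventually_pow_succ_mul_mem {q : Ultrafilter M} {P : Set M} {j : ℕ} {c : M} :
    (∀ᶠ y in ↑(q ^ (j + 1)), c * y ∈ P) ↔ ∀ᶠ x in q, ∀ᶠ y in ↑(q ^ j), c * x * y ∈ P := by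
  simp only [pow_succ', Ultrafilter.eventually_mul, mul_assoc]

end Monoid

attribute [local instance] ultrafilterMonoid Ultrafilter.addSemigroup

section FiniteSums

variable {M : Type*} [AddSemigroup M]

theorem FS_drop_subset_of_add_mem {a : Stream' M} {V : ℕ → Set M} (hmem : ∀ n, a.get n ∈ V n)
    (hanti : ∀ n, V (n + 1) ⊆ V n) (hadd : ∀ n, ∀ x ∈ V (n + 1), a.get n + x ∈ V n) (n : ℕ) :
    FS (a.drop n) ⊆ V n := by
  intro s hs
  generalize hb : a.drop n = b at hs
  induction hs generalizing n with
  | head' b =>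
    subst hb
    simpa using hmem n
  | tail' b s _ ih =>
    subst hb
    exact hanti n (ih (n + 1) (by rw [Stream'.tail_drop']))
  | cons' b s _ ih =>
    subst hb
    simpa using hadd n s (ih (n + 1) (by rw [Stream'.tail_drop']))

theorem exists_mem_eventually_add_mem {q : Ultrafilter M} (hq : q + q = q) {V : Set M}
    (hV : V ∈ q) : ∃ x ∈ V, ∀ᶠ y in q, x + y ∈ V := by
  have hV' : ∀ᶠ x in q, ∀ᶠ y in q, x + y ∈ V := by
    rwa [← Ultrafilter.eventually_add, hq]
  exact (Eventually.and (f := (q : Filter M)) hV hV').exists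

theorem exists_stream_FS_drop_subset {q : Ultrafilter M} (hq : q + q = q) {W : List M → Set M}
    (hW : ∀ l, W l ∈ q) : ∃ a : Stream' M, ∀ n, FS (a.drop n) ⊆ W (a.take n) := by
  -- A state consists of the terms chosen so far and a `q`-large set that contains all later sums.
  let State := {s : List M × Set M // s.2 ∈ q ∧ s.2 ⊆ W s.1}
  have hstep : ∀ s : State, ∃ x ∈ s.1.2, ∃ s' : State, s'.1.1 = s.1.1 ++ [x] ∧
      s'.1.2 ⊆ s.1.2 ∧ ∀ y ∈ s'.1.2, x + y ∈ s.1.2 := by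
    rintro ⟨⟨l, V⟩, hV, -⟩
    obtain ⟨x, hx, hxV⟩ := exists_mem_eventually_add_mem hq hV
    exact ⟨x, hx, ⟨(l ++ [x], V ∩ {y | x + y ∈ V} ∩ W (l ++ [x])),
      inter_mem (inter_mem hV hxV) (hW _), Set.inter_subset_right⟩, rfl,
      fun _ hy => hy.1.1, fun _ hy => hy.1.2⟩
  choose elem helem next hlist hsub hadd using hstep
  let state : ℕ → State := fun n => next^[n] ⟨([], W []), hW [], subset_rfl⟩
  have hstate : ∀ n, state (n + 1) = next (state n) := fun n => Function.iterate_succ_apply' ..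
  let a : Stream' M := fun n => elem (state n)
  have htake : ∀ n, (state n).1.1 = a.take n := by
    intro n
    induction n with
    | zero => rfl
    | succ n ih => rw [hstate, hlist, ih, Stream'.take_succ', Stream'.get]
  refine ⟨a, fun n => ?_⟩
  rw [← htake]
  refine (FS_drop_subset_of_add_mem (V := fun n => (state n).1.2) (fun n => helem _) ?_ ?_ n).trans
    (state n).2.2
  · intro n
    simpa only [hstate] using hsub (state n)
  · intro n
    simpa only [hstate, Stream'.get] using hadd (state n)

theorem FS_drop_antitone (a : Stream' M) : Antitone fun n => FS (a.drop n) := by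
  refine antitone_nat_of_succ_le fun n => ?_
  rw [← Stream'.drop_drop]
  exact FS_iter_tail_sub_FS _ _

theorem exists_mem_FS_drop_map_eq_sum {N : Type*} [AddCommMonoid N] (φ : M →ₙ+ N) (a : Stream' M)
    {F : Finset ℕ} (hF : F.Nonempty) {n : ℕ} (hn : ∀ t ∈ F, n ≤ t) :
    ∃ s ∈ FS (a.drop n), φ s = ∑ t ∈ F, φ (a.get t) := by
  induction F using Finset.induction_on_min generalizing n with
  | empty => exact absurd hF Finset.not_nonempty_empty
  | insert k F hk ih =>
    have hnk : FS (a.drop k) ⊆ FS (a.drop n) :=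
      FS_drop_antitone a (hn k (Finset.mem_insert_self k F))
    have hkF : k ∉ F := fun h => (hk k h).false
    have hhead : (a.drop k).head = a.get k := by simp
    rcases F.eq_empty_or_nonempty with rfl | hF
    · exact ⟨a.get k, hnk (hhead ▸ FS.head _), by simp⟩
    · obtain ⟨s, hs, hsum⟩ := ih hF (n := k + 1) hk
      refine ⟨a.get k + s, hnk (hhead ▸ FS.cons _ s ?_), ?_⟩
      · rwa [Stream'.tail_drop']
      · rw [Finset.sum_insert hkF, map_add, hsum]

end FiniteSums

theorem one_add_sum_le_prod_one_add {σ R : Type*} [CommSemiring R] [PartialOrder R]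
    [CanonicallyOrderedAdd R] (f : σ → R) (s : Finset σ) :
    1 + ∑ i ∈ s, f i ≤ ∏ i ∈ s, (1 + f i) := by
  induction s using Finset.cons_induction with
  | empty => simp
  | cons i s hi ih =>
    rw [Finset.sum_cons, Finset.prod_cons]
    calc 1 + (f i + ∑ k ∈ s, f k) ≤ (1 + f i) * (1 + ∑ k ∈ s, f k) :=
          le_iff_exists_add.2 ⟨f i * ∑ k ∈ s, f k, by ring⟩
      _ ≤ (1 + f i) * ∏ k ∈ s, (1 + f k) := by gcongr

theorem mul_sum_le_prod_range {R : Type*} [CommSemiring R] [PartialOrder R]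
    [CanonicallyOrderedAdd R] {f : ℕ → R} {c : R} {n k : ℕ}
    (hc : c ≤ ∏ t ∈ Finset.range n, (1 + f t)) (hnk : n ≤ k) {F : Finset ℕ}
    (hF : F ⊆ Finset.Ico n k) : c * ∑ t ∈ F, f t ≤ ∏ t ∈ Finset.range k, (1 + f t) := by
  have hsum : ∑ t ∈ F, f t ≤ ∏ t ∈ Finset.Ico n k, (1 + f t) :=
    calc ∑ t ∈ F, f t ≤ ∑ t ∈ Finset.Ico n k, f t := Finset.sum_le_sum_of_subset hF
      _ ≤ 1 + ∑ t ∈ Finset.Ico n k, f t := le_add_self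
      _ ≤ ∏ t ∈ Finset.Ico n k, (1 + f t) := one_add_sum_le_prod_one_add f _
  rw [← Finset.prod_range_mul_prod_Ico _ hnk]
  exact mul_le_mul' hc hsum

section ImagePartitionRegular

variable {ι κ : Type} {A : ι → κ → ℚ} {p q : Ultrafilter ℕ+} {P Q : Set ℕ+}

theorem mulVecQ_const_mul (A : ι → κ → ℚ) (c : ℕ+) (x : κ → ℕ+) (i : ι) :
    mulVecQ A (fun j => c * x j) i = (c : ℕ) * mulVecQ A x i := by
  simp only [mulVecQ, ← smul_eq_mul ((c : ℕ) : ℚ), smul_finsum]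
  simp only [PNat.mul_coe, Nat.cast_mul, smul_eq_mul, mul_left_comm]

theorem mulVecQ_add [Finite κ] (A : ι → κ → ℚ) (x y : κ → ℕ+) (i : ι) :
    mulVecQ A (fun j => x j + y j) i = mulVecQ A x i + mulVecQ A y i := by
  simp only [mulVecQ, PNat.add_coe, Nat.cast_add, mul_add]
  exact finsum_add_distrib (Set.toFinite _) (Set.toFinite _)

theorem entriesIn.mono {y : ι → ℚ} (h : entriesIn y P) (hPQ : P ⊆ Q) : entriesIn y Q := fun i =>
  let ⟨n, hn, hy⟩ := h i
  ⟨n, hPQ hn, hy⟩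

theorem entriesIn.eventually [Finite ι] {α : Type*} {l : Filter α} {y : ι → ℚ} {R : ℕ+ → α → Prop}
    (h : entriesIn y {n | ∀ᶠ a in l, R n a}) : ∀ᶠ a in l, entriesIn y {n | R n a} :=
  eventually_all.2 fun i =>
    let ⟨n, hn, hy⟩ := h i
    hn.mono fun _ ha => ⟨n, ha, hy⟩

theorem entriesIn.const_mul {x : κ → ℕ+} {c : ℕ+} (h : entriesIn (mulVecQ A x) {n | c * n ∈ P}) :
    entriesIn (mulVecQ A fun j => c * x j) P := fun i => by
  obtain ⟨n, hn, hx⟩ := h i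
  refine ⟨c * n, hn, ?_⟩
  rw [mulVecQ_const_mul, hx, PNat.mul_coe, Nat.cast_mul]

theorem IPR.exists_entriesIn_of_cover (hA : IPR A) {σ : Type*} [Finite σ] {C : σ → Set ℕ+}
    (hC : ∀ n, ∃ s, n ∈ C s) : ∃ s x, entriesIn (mulVecQ A x) (C s) := by
  choose color hcolor using hC
  obtain ⟨r, ⟨e⟩⟩ := Finite.exists_equiv_fin σ
  obtain ⟨k, x, hx⟩ := hA r (e ∘ color)
  refine ⟨e.symm k, x, hx.mono ?_⟩
  rintro n rfl
  simpa only [Function.comp_apply, Equiv.symm_apply_apply] using hcolor n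

theorem ISet_eq_iInter (A : ι → κ → ℚ) :
    ISet A = ⋂ P : {P : Set ℕ+ // ¬ ∃ x, entriesIn (mulVecQ A x) P}, {p | P.1ᶜ ∈ p} := by
  ext p
  simp only [ISet, Set.mem_ofPred_eq, Set.mem_iInter, Subtype.forall,
    Ultrafilter.compl_mem_iff_notMem]
  exact forall_congr' fun P => not_imp_not.symm

theorem isClosed_ISet (A : ι → κ → ℚ) : IsClosed (ISet A) := by
  rw [ISet_eq_iInter]
  exact isClosed_iInter fun P => ultrafilter_isClosed_basic _

theorem IPR.nonempty_ISet (hA : IPR A) : (ISet A).Nonempty := by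
  rw [ISet_eq_iInter]
  refine CompactSpace.iInter_nonempty (fun P => ultrafilter_isClosed_basic _) fun T => ?_
  by_contra hempty
  have hcover : ∀ n, ∃ P : T, n ∈ P.1.1 := by
    intro n
    by_contra! hn
    exact hempty ⟨pure n, Set.mem_iInter₂.2 fun P hP => hn ⟨P, hP⟩⟩
  obtain ⟨P, hP⟩ := hA.exists_entriesIn_of_cover hcover
  exact P.1.2 hP

theorem mul_mem_ISet_right (p : Ultrafilter ℕ+) (hq : q ∈ ISet A) : p * q ∈ ISet A := by
  intro P hP
  obtain ⟨c, hc⟩ := ((Ultrafilter.eventually_mul p q (· ∈ P)).1 hP).exists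
  obtain ⟨x, hx⟩ := hq _ hc
  exact ⟨_, hx.const_mul⟩

theorem mul_mem_ISet_left [Finite ι] (hp : p ∈ ISet A) (q : Ultrafilter ℕ+) : p * q ∈ ISet A := by
  intro P hP
  obtain ⟨x, hx⟩ := hp _ ((Ultrafilter.eventually_mul p q (· ∈ P)).1 hP)
  obtain ⟨c, hc⟩ := hx.eventually.exists
  simp only [mul_comm _ c] at hc
  exact ⟨_, hc.const_mul⟩

theorem list_prod_mem_ISet [Finite ι] {l : List (Ultrafilter ℕ+)} (hpl : p ∈ l)
    (hp : p ∈ ISet A) : l.prod ∈ ISet A := by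
  obtain ⟨s, t, rfl⟩ := List.append_of_mem hpl
  rw [List.prod_append, List.prod_cons]
  exact mul_mem_ISet_right _ (mul_mem_ISet_left hp _)

theorem add_mem_ISet [Finite ι] [Finite κ] (hp : p ∈ ISet A) (hq : q ∈ ISet A) :
    p + q ∈ ISet A := by
  intro P hP
  obtain ⟨x, hx⟩ := hp _ ((Ultrafilter.eventually_add p q (· ∈ P)).1 hP)
  obtain ⟨y, hy⟩ := hq _ hx.eventually
  refine ⟨fun j => x j + y j, fun i => ?_⟩
  obtain ⟨b, hb, hyb⟩ := hy i
  obtain ⟨a, ha, hxa⟩ := hb i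
  refine ⟨a + b, ha, ?_⟩
  rw [mulVecQ_add, hxa, hyb, PNat.add_coe, Nat.cast_add]

end ImagePartitionRegular

section Family

variable {m : ℕ} {ι κ : Fin m → Type} [∀ i, Finite (ι i)] {A : ∀ i, ι i → κ i → ℚ}

theorem nonempty_iInter_ISet (hA : ∀ i, IPR (A i)) : (⋂ i, ISet (A i)).Nonempty := by
  choose p hp using fun i => (hA i).nonempty_ISet
  exact ⟨(List.ofFn p).prod, Set.mem_iInter.2 fun i =>
    list_prod_mem_ISet (List.mem_ofFn.2 ⟨i, rfl⟩) (hp i)⟩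

theorem exists_add_idempotent_forall_mem_ISet [∀ i, Finite (κ i)] (hA : ∀ i, IPR (A i)) :
    ∃ q : Ultrafilter ℕ+, q + q = q ∧ ∀ i, q ∈ ISet (A i) := by
  have hclosed : IsClosed (⋂ i, ISet (A i)) := isClosed_iInter fun i => isClosed_ISet (A i)
  obtain ⟨q, hq, hidem⟩ := exists_idempotent_in_compact_add_subsemigroup
    Ultrafilter.continuous_add_left (⋂ i, ISet (A i)) (nonempty_iInter_ISet hA) hclosed.isCompact
    fun p hp q hq => Set.mem_iInter.2 fun i =>
      add_mem_ISet (Set.mem_iInter.1 hp i) (Set.mem_iInter.1 hq i)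
  exact ⟨q, hidem, Set.mem_iInter.1 hq⟩

theorem exists_entriesIn_prod {p : Fin m → Ultrafilter ℕ+} (hp : ∀ i, p i ∈ ISet (A i))
    {P : Set ℕ+} (hP : P ∈ (List.ofFn p).prod) :
    ∃ y : ∀ i, κ i → ℕ+,
      entriesIn (fun f : ∀ i, ι i => ∏ i, mulVecQ (A i) (y i) (f i)) P := by
  induction m generalizing P with
  | zero => exact ⟨fun i => i.elim0, fun _ => ⟨1, hP, by simp⟩⟩
  | succ m ih =>
    rw [List.ofFn_succ, List.prod_cons] at hP
    obtain ⟨y₀, hy₀⟩ := hp 0 _ ((Ultrafilter.eventually_mul _ _ (· ∈ P)).1 hP)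
    obtain ⟨y, hy⟩ := ih (fun i => hp i.succ) hy₀.eventually
    refine ⟨Fin.cons y₀ y, fun f => ?_⟩
    obtain ⟨b, hb, hyb⟩ := hy fun i => f i.succ
    obtain ⟨a, ha, hya⟩ := hb (f 0)
    refine ⟨a * b, ha, ?_⟩
    simp only [Fin.prod_univ_succ, Fin.cons_zero, Fin.cons_succ]
    rw [hya, PNat.mul_coe, Nat.cast_mul, ← hyb]

end Family

/-- The weights `1 + z t` bound sums by products, so `∏ t ∈ range n, (1 + z t)` bounds every
product of sums of terms that precede `z n`. -/
theorem exists_seq_forall_sum_mem {q : Ultrafilter ℕ+} (hq : q + q = q) {W : ℕ+ → Set ℕ+}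
    (hW : ∀ N, W N ∈ q) :
    ∃ z : ℕ → ℕ+, ∀ (n : ℕ) (F : Finset ℕ), F.Nonempty → (∀ t ∈ F, n ≤ t) →
      ∃ s ∈ W (∏ t ∈ Finset.range n, (1 + z t)), (s : ℕ) = ∑ t ∈ F, (z t : ℕ) := by
  obtain ⟨a, ha⟩ := exists_stream_FS_drop_subset hq
    (W := fun l => W (l.map (1 + ·)).prod) fun l => hW _
  have hprod : ∀ n, ((a.take n).map (1 + ·)).prod = ∏ t ∈ Finset.range n, (1 + a.get t) := by
    intro n
    induction n with
    | zero => rfl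
    | succ n ih => rw [Stream'.take_succ', List.map_append, List.prod_append, ih,
        Finset.prod_range_succ, List.map_singleton, List.prod_singleton]
  refine ⟨a.get, fun n F hF hn => ?_⟩
  obtain ⟨s, hs, hsum⟩ := exists_mem_FS_drop_map_eq_sum PNat.coeAddHom a hF hn
  exact ⟨s, hprod n ▸ ha n hs, hsum⟩

theorem setOf_forall_eventually_pow_mem (q : Ultrafilter ℕ+) (P : Set ℕ+) (m : ℕ) (N : ℕ+) :
    {x | ∀ j < m, ∀ c ≤ N, (∀ᶠ y in ↑(q ^ (j + 1)), c * y ∈ P) →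
      ∀ᶠ y in ↑(q ^ j), c * x * y ∈ P} ∈ q := by
  refine (eventually_all_finite (Set.finite_Iio m)).2 fun j _ =>
    (eventually_all_finite (Set.finite_Iic N)).2 fun c _ => ?_
  rw [eventually_pow_succ_mul_mem]
  exact eventually_imp_distrib_left.2 id

theorem exists_eq_mul_prod_sum {m : ℕ} {R : ℕ → ℕ+ → Prop} {z : ℕ → ℕ+}
    (hz : ∀ j < m, ∀ n, ∀ c ≤ ∏ t ∈ Finset.range n, (1 + z t), R (j + 1) c →
      ∀ F : Finset ℕ, F.Nonempty → (∀ t ∈ F, n ≤ t) →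
        ∃ d, R j d ∧ (d : ℕ) = c * ∑ t ∈ F, (z t : ℕ))
    {n : ℕ} {c : ℕ+} (hc : c ≤ ∏ t ∈ Finset.range n, (1 + z t)) (hR : R m c)
    {F : Fin m → Finset ℕ} (hF : ∀ i, (F i).Nonempty) (hn : ∀ i, ∀ t ∈ F i, n ≤ t)
    (hlt : ∀ i k, i < k → ∀ s ∈ F i, ∀ t ∈ F k, s < t) :
    ∃ w, R 0 w ∧ (w : ℕ) = c * ∏ i, ∑ t ∈ F i, (z t : ℕ) := by
  induction m generalizing n c with
  | zero => exact ⟨c, hR, by simp⟩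
  | succ m ih =>
    obtain ⟨d, hd, hdsum⟩ := hz m m.lt_succ_self n c hc hR (F 0) (hF 0) (hn 0)
    have hcoe : ∀ l, ((∏ t ∈ Finset.range l, (1 + z t) : ℕ+) : ℕ) =
        ∏ t ∈ Finset.range l, (1 + (z t : ℕ)) := fun l => map_prod PNat.coeMonoidHom _ _
    let k := (F 0).max' (hF 0) + 1
    have hnk : n ≤ k := (hn 0 _ (Finset.max'_mem _ (hF 0))).trans (Nat.le_succ _)
    have hFk : F 0 ⊆ Finset.Ico n k := fun t ht =>
      Finset.mem_Ico.2 ⟨hn 0 t ht, Nat.lt_succ_of_le (Finset.le_max' _ t ht)⟩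
    have hdk : d ≤ ∏ t ∈ Finset.range k, (1 + z t) := by
      rw [← PNat.coe_le_coe, hcoe] at hc ⊢
      exact hdsum ▸ mul_sum_le_prod_range hc hnk hFk
    obtain ⟨w, hw, hwprod⟩ := ih (fun j hj => hz j (hj.trans m.lt_succ_self)) hdk hd
      (F := fun i => F i.succ) (fun i => hF i.succ)
      (fun i => hlt 0 i.succ i.succ_pos _ (Finset.max'_mem _ (hF 0)))
      (fun i l hil => hlt i.succ l.succ (Fin.succ_lt_succ_iff.2 hil))
    exact ⟨w, hw, by rw [hwprod, hdsum, Fin.prod_univ_succ, mul_assoc]⟩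

theorem exists_PSm_subset {q : Ultrafilter ℕ+} (hq : q + q = q) {m : ℕ} {P : Set ℕ+}
    (hP : P ∈ q ^ m) : ∃ z, PSm m z ⊆ P := by
  obtain ⟨z, hz⟩ := exists_seq_forall_sum_mem hq (setOf_forall_eventually_pow_mem q P m)
  let R : ℕ → ℕ+ → Prop := fun j c => ∀ᶠ y in ↑(q ^ j), c * y ∈ P
  have hdescent : ∀ j < m, ∀ n, ∀ c ≤ ∏ t ∈ Finset.range n, (1 + z t), R (j + 1) c →
      ∀ F : Finset ℕ, F.Nonempty → (∀ t ∈ F, n ≤ t) →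
        ∃ d, R j d ∧ (d : ℕ) = c * ∑ t ∈ F, (z t : ℕ) := by
    intro j hj n c hc hR F hF hn
    obtain ⟨s, hs, hsum⟩ := hz n F hF hn
    exact ⟨c * s, hs j hj c hc hR, by rw [PNat.mul_coe, hsum]⟩
  have hR : R m 1 := by
    simp only [R, one_mul]
    exact hP
  refine ⟨z, ?_⟩
  rintro w ⟨F, hF, hlt, hw⟩
  obtain ⟨w', hw', hprod⟩ := exists_eq_mul_prod_sum hdescent (n := 0) (c := 1) le_rfl hR hF
    (fun _ t _ => t.zero_le) hlt
  obtain rfl : w' = w := PNat.coe_injective (by rw [hprod, hw, PNat.one_coe, one_mul])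
  change w' * 1 ∈ P at hw'
  rwa [mul_one] at hw'

/-- Theorem 3.17: let `ℕ = E_1 ∪ … ∪ E_r` and let
`A 0, …, A (m-1)` be finite image partition regular matrices over `(ℕ,+)`.
Then there are `k`, vectors `x i, y i ∈ ℕ^{v i}` and a sequence `{z_t}` in `ℕ`
such that all entries of each `A i (x i)` lie in `E_k`,
`P(A 0 (y 0), …, A (m-1) (y (m-1))) ⊆ E_k`, and `PS_m({z_t}) ⊆ E_k`. -/
theorem stmt_19 (r m : ℕ) (hm : 0 < m) (u v : Fin m → ℕ)
    (A : ∀ i, Fin (u i) → Fin (v i) → ℚ) (hA : ∀ i, IPR (A i))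
    (E : Fin r → Set ℕ+) (hE : ∀ n : ℕ+, ∃ i, n ∈ E i) :
    ∃ (k : Fin r) (x y : ∀ i, Fin (v i) → ℕ+) (z : ℕ → ℕ+),
      (∀ i, entriesIn (mulVecQ (A i) (x i)) (E k)) ∧
      (∀ f : ∀ i, Fin (u i), ∃ n ∈ E k,
        (∏ i, mulVecQ (A i) (y i) (f i)) = ((n : ℕ) : ℚ)) ∧
      PSm m z ⊆ E k := by
  obtain ⟨q, hidem, hq⟩ := exists_add_idempotent_forall_mem_ISet hA
  obtain ⟨k, hk⟩ : ∃ k, E k ∈ q ^ m := Ultrafilter.eventually_exists_iff.1 (.of_forall hE)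
  have hmem : ∀ i, q ^ m ∈ ISet (A i) := fun i => by
    rw [← List.prod_replicate]
    exact list_prod_mem_ISet (List.mem_replicate.2 ⟨hm.ne', rfl⟩) (hq i)
  choose x hx using fun i => hmem i (E k) hk
  obtain ⟨y, hy⟩ := exists_entriesIn_prod hq (P := E k)
    (by rwa [List.ofFn_const, List.prod_replicate])
  obtain ⟨z, hz⟩ := exists_PSm_subset hidem hk
  exact ⟨k, x, y, z, hx, hy, hz⟩
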